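/- arXiv:2604.13212 — 2 statements merged into one kernel-verified Lean document; each statement's English description precedes it below -/
import Mathlib

section
/- Suppose S and T are a shield and a target of a graph G. If G is ST^(3)-(S,T)-degenerate, then G is (S+T, T)-DP-colorable. Consequently, if G is ST^(3)-(s,t)-degenerate for integers s ≥ 0 and t ≥ 1, then χ*_DP(G) ≤ (s+t)/t. -/
open scoped Classical

noncomputable section

namespace StrictDeg

/-- The state of the `ShadeSave` process: the active vertex set (the vertex set of the
current induced subgraph), the current shield, and the current target. -/
structure State (V : Type) where
  A : Finset V
  S : V → ℕ
  T : V → ℕ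

variable {V : Type}

/-- The output of the operation `ShadeSave(G[A], S, T, u, W)`. -/
def applyStep (G : SimpleGraph V) (st : State V) (u : V) (W : Finset V) : State V where
  A := if st.T u = 1 then st.A.erase u else st.A
  S := fun v => if G.Adj u v ∧ v ∈ st.A ∧ v ∉ W then st.S v - 1 else st.S v
  T := fun v => if v = u ∧ 1 < st.T u then st.T u - 1 else st.T v

/-- Legality of the operation `ShadeSave(G[A], S, T, u, W)`:  `u` is a vertex of the current
graph, `W` is a set of neighbors of `u` in the current graph,
`S u + T u > ∑_{w ∈ W} (S w + T w)`, and the output shield is nonnegative (in `ℕ` terms: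
every neighbor of `u` in the current graph that is not saved has shield value at least 1). -/
def LegalStep (G : SimpleGraph V) (st : State V) (u : V) (W : Finset V) : Prop :=
  u ∈ st.A ∧
  (∀ w ∈ W, w ∈ st.A ∧ G.Adj u w) ∧
  (∑ w ∈ W, (st.S w + st.T w)) < st.S u + st.T u ∧
  (∀ v ∈ st.A, G.Adj u v → v ∉ W → 1 ≤ st.S v)

/-- `LegalSeq G st l` means `l` is a legal sequence of `ShadeSave` operations starting
from the state `st`. -/
def LegalSeq (G : SimpleGraph V) : State V → List (V × Finset V) → Prop
  | _, [] => True
  | st, op :: rest => LegalStep G st op.1 op.2 ∧ LegalSeq G (applyStep G st op.1 op.2) rest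

/-- The final state after applying the operations in `l` in order. -/
def finalState (G : SimpleGraph V) (st : State V) (l : List (V × Finset V)) : State V :=
  l.foldl (fun s op => applyStep G s op.1 op.2) st

/-- The induced subgraph of `G` on `A`, with shield `S` and target `T`, admits a complete
legal sequence, i.e. it is `ST⁽³⁾`-`(S,T)`-degenerate. -/
def ST3DegOn (G : SimpleGraph V) (A : Finset V) (S T : V → ℕ) : Prop :=
  ∃ l : List (V × Finset V),
    LegalSeq G ⟨A, S, T⟩ l ∧ (finalState G ⟨A, S, T⟩ l).A = ∅

/-- The induced subgraph of `G` on `A`, with shield `S` and target `T`, admits a complete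
restricted (every operation saves on at most one vertex) legal sequence, i.e. it is
`ST⁽⁴⁾`-`(S,T)`-degenerate. -/
def ST4DegOn (G : SimpleGraph V) (A : Finset V) (S T : V → ℕ) : Prop :=
  ∃ l : List (V × Finset V),
    LegalSeq G ⟨A, S, T⟩ l ∧ (∀ op ∈ l, op.2.card ≤ 1) ∧
      (finalState G ⟨A, S, T⟩ l).A = ∅

/-- `G` is `ST⁽³⁾`-`(S,T)`-degenerate. -/
def ST3Deg [Fintype V] (G : SimpleGraph V) (S T : V → ℕ) : Prop :=
  ST3DegOn G Finset.univ S T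

/-- `G` is `ST⁽⁴⁾`-`(S,T)`-degenerate. -/
def ST4Deg [Fintype V] (G : SimpleGraph V) (S T : V → ℕ) : Prop :=
  ST4DegOn G Finset.univ S T

/-- The fractional strict type-3 degeneracy
`ST⁽³⁾*(G) = inf {(s+t)/t : G is ST⁽³⁾-(s,t)-degenerate}`. -/
def ST3Star [Fintype V] (G : SimpleGraph V) : ℝ :=
  sInf { x : ℝ | ∃ s t : ℕ, 1 ≤ t ∧ ST3Deg G (fun _ => s) (fun _ => t) ∧
    x = ((s : ℝ) + t) / t }

/-- The fractional strict type-4 degeneracy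
`ST⁽⁴⁾*(G) = inf {(s+t)/t : G is ST⁽⁴⁾-(s,t)-degenerate}`. -/
def ST4Star [Fintype V] (G : SimpleGraph V) : ℝ :=
  sInf { x : ℝ | ∃ s t : ℕ, 1 ≤ t ∧ ST4Deg G (fun _ => s) (fun _ => t) ∧
    x = ((s : ℝ) + t) / t }

/-- A cover `𝓗 = (L, H)` of the graph `G`. -/
structure Cover (G : SimpleGraph V) where
  /-- The vertex type of the cover graph `H`. -/
  U : Type
  fin : Fintype U
  /-- The cover graph. -/
  H : SimpleGraph U
  /-- The lists: `L v` is the part of the partition of `V(H)` corresponding to `v`. -/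
  L : V → Finset U
  part : ∀ x : U, ∃! v : V, x ∈ L v
  indep : ∀ v : V, ∀ x ∈ L v, ∀ y ∈ L v, ¬ H.Adj x y
  cross : ∀ u v : V, ∀ x ∈ L u, ∀ y ∈ L v, H.Adj x y → G.Adj u v
  matching : ∀ u v : V, G.Adj u v → ∀ x ∈ L u, ∀ y ∈ L v, ∀ y' ∈ L v,
      H.Adj x y → H.Adj x y' → y = y'

/-- `G` is `(𝓗, b)`-colorable: there is an independent set of the cover graph meeting
every list in at least `b` vertices. -/
def Cover.Colorable {G : SimpleGraph V} (C : Cover G) (b : ℕ) : Prop :=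
  ∃ I : Finset C.U, (∀ x ∈ I, ∀ y ∈ I, ¬ C.H.Adj x y) ∧ ∀ v : V, b ≤ (I ∩ C.L v).card

/-- `G` is `(a,b)`-DP-colorable. -/
def DPColorable (G : SimpleGraph V) (a b : ℕ) : Prop :=
  ∀ C : Cover G, (∀ v : V, (C.L v).card = a) → C.Colorable b

/-- The fractional DP-chromatic number
`χ*_DP(G) = inf {a/b : G is (a,b)-DP-colorable}`. -/
def DPStar (G : SimpleGraph V) : ℝ :=
  sInf { x : ℝ | ∃ a b : ℕ, 1 ≤ b ∧ b ≤ a ∧ DPColorable G a b ∧ x = (a : ℝ) / b }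

/-- `G` is `(F₁, F₂)`-DP-colorable. -/
def DPColorableFn (G : SimpleGraph V) (F₁ F₂ : V → ℕ) : Prop :=
  ∀ C : Cover G, (∀ v : V, (C.L v).card = F₁ v) →
    ∃ I : Finset C.U, (∀ x ∈ I, ∀ y ∈ I, ¬ C.H.Adj x y) ∧
      ∀ v : V, (I ∩ C.L v).card = F₂ v

/-!
The colouring is built greedily along the legal sequence. The invariant is that every active
vertex `v` still has a list of at least `S v + T v` admissible colours, of which `T v` are to be
chosen. Before an operation at `u` saving on `W`, trim the lists to exactly these sizes. Each
colour in the lists of `W` is adjacent to at most one colour of `L u`, so the inequality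
`∑_{w ∈ W} (S w + T w) < S u + T u` leaves a colour `x` over `u` with no neighbour in the lists of
`W`. Now choose `x` and discard it together with its neighbours: this costs one colour at `u`, paid
for by the target, at most one colour at each unsaved neighbour of `u`, paid for by the shield,
and nothing elsewhere.
-/

/-- The number of colours a state still has to choose at each vertex. Recording `0` at deleted
vertices makes every operation at `u` lower the demand at `u` by exactly one, whether or not `u`
is deleted. -/
def State.demand (st : State V) (v : V) : ℕ :=
  if v ∈ st.A then st.T v else 0

section ApplyStep

variable {G : SimpleGraph V} {st : State V} {u v : V} {W : Finset V}

lemma mem_of_mem_applyStep (hv : v ∈ (applyStep G st u W).A) : v ∈ st.A := by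
  dsimp only [applyStep] at hv
  split_ifs at hv
  · exact Finset.mem_of_mem_erase hv
  · exact hv

lemma one_le_applyStep_T (hT : 1 ≤ st.T v) : 1 ≤ (applyStep G st u W).T v := by
  dsimp only [applyStep]
  split_ifs <;> omega

lemma demand_applyStep_add_single (hu : u ∈ st.A) (hT : 1 ≤ st.T u) :
    (applyStep G st u W).demand + Pi.single u 1 = st.demand := by
  funext v
  obtain rfl | hvu := eq_or_ne v u
  · obtain hT1 | hT1 := hT.eq_or_lt'
    · simp [State.demand, applyStep, hu, hT1]
    · simp only [State.demand, applyStep, Pi.add_apply, Pi.single_eq_same, hu, hT1, hT1.ne',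
        if_true, if_false, and_self]
      omega
  · by_cases hT1 : st.T u = 1 <;> simp [State.demand, applyStep, hT1, hvu]

lemma applyStep_S_add_T_self (hT : 1 ≤ st.T u) (hu : u ∈ (applyStep G st u W).A) :
    (applyStep G st u W).S u + (applyStep G st u W).T u + 1 = st.S u + st.T u := by
  have hT1 : st.T u ≠ 1 := fun h => by simp [applyStep, h] at hu
  have hlt : 1 < st.T u := by omega
  simp only [applyStep, SimpleGraph.irrefl, false_and, if_false, true_and, hlt, if_true]
  omega

lemma LegalStep.applyStep_S_add_T_of_unsaved (h : LegalStep G st u W) (hv : v ∈ st.A)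
    (hadj : G.Adj u v) (hW : v ∉ W) :
    (applyStep G st u W).S v + (applyStep G st u W).T v + 1 = st.S v + st.T v := by
  have hS : 1 ≤ st.S v := h.2.2.2 v hv hadj hW
  simp only [applyStep, hadj, hv, hW, hadj.ne', not_false_eq_true, and_self, if_true, false_and,
    if_false]
  omega

lemma applyStep_S_add_T_of_ne (hvu : v ≠ u) (hW : G.Adj u v → v ∈ W) :
    (applyStep G st u W).S v + (applyStep G st u W).T v = st.S v + st.T v := by
  have : ¬ (G.Adj u v ∧ v ∈ st.A ∧ v ∉ W) := fun h => h.2.2 (hW h.1)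
  simp only [applyStep, this, hvu, false_and, if_false]

end ApplyStep

namespace Cover

variable {G : SimpleGraph V} (C : Cover G) {u v : V} {x : C.U}

lemma eq_of_mem_of_mem (hu : x ∈ C.L u) (hv : x ∈ C.L v) : u = v :=
  (C.part x).unique hu hv

lemma eq_of_adj_of_adj {y y' : C.U} (hy : y ∈ C.L v) (hy' : y' ∈ C.L v)
    (hxy : C.H.Adj x y) (hxy' : C.H.Adj x y') : y = y' := by
  obtain ⟨u, hx, -⟩ := C.part x
  exact C.matching u v (C.cross u v x hx y hy hxy) x hx y hy y' hy' hxy hxy'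

lemma exists_mem_forall_not_adj {X Y : Finset C.U} (hX : X ⊆ C.L u) (hlt : Y.card < X.card) :
    ∃ x ∈ X, ∀ y ∈ Y, ¬ C.H.Adj x y := by
  by_contra! hneighbor
  refine hlt.not_ge (Finset.card_le_card_of_forall_subsingleton C.H.Adj hneighbor ?_)
  rintro y - x ⟨hx, hxy⟩ x' ⟨hx', hxy'⟩
  exact C.eq_of_adj_of_adj (hX hx) (hX hx') hxy.symm hxy'.symm

/-- The lists that remain once the colour `x` has been chosen: `x` and its neighbours in the cover
graph are discarded from every list of `M`. -/
def residual (M : V → Finset C.U) (x : C.U) (v : V) : Finset C.U :=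
  (M v).filter fun y => y ≠ x ∧ ¬ C.H.Adj x y

lemma residual_subset (M : V → Finset C.U) (x : C.U) (v : V) : C.residual M x v ⊆ M v :=
  Finset.filter_subset _ _

lemma residual_eq_self {M : V → Finset C.U} (hx : x ∉ M v) (hadj : ∀ y ∈ M v, ¬ C.H.Adj x y) :
    C.residual M x v = M v :=
  Finset.filter_true_of_mem fun y hy => ⟨ne_of_mem_of_not_mem hy hx, hadj y hy⟩

lemma card_le_card_residual_add_one {M : V → Finset C.U} (hM : M v ⊆ C.L v) (x : C.U) :
    (M v).card ≤ (C.residual M x v).card + 1 := by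
  have hdiscarded : ((M v).filter fun y => ¬ (y ≠ x ∧ ¬ C.H.Adj x y)).card ≤ 1 := by
    refine Finset.card_le_one.mpr fun y hy y' hy' => ?_
    simp only [Finset.mem_filter, not_and_or, not_not] at hy hy'
    obtain ⟨hyM, rfl | hxy⟩ := hy <;> obtain ⟨hyM', rfl | hxy'⟩ := hy'
    · rfl
    · exact absurd hxy' (C.indep v _ (hM hyM) _ (hM hyM'))
    · exact absurd hxy (C.indep v _ (hM hyM') _ (hM hyM))
    · exact C.eq_of_adj_of_adj (hM hyM) (hM hyM') hxy hxy'
  rw [← Finset.card_filter_add_card_filter_not (s := M v) fun y => y ≠ x ∧ ¬ C.H.Adj x y]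
  exact Nat.add_le_add_left hdiscarded _

/-- The independent set `I` of the cover graph chooses exactly `d v` colours over each vertex `v`,
all of them from the list `M v`. -/
structure IsColoring (M : V → Finset C.U) (d : V → ℕ) (I : Finset C.U) : Prop where
  indep : ∀ x ∈ I, ∀ y ∈ I, ¬ C.H.Adj x y
  inter_subset : ∀ v, I ∩ C.L v ⊆ M v
  card_inter : ∀ v, (I ∩ C.L v).card = d v

namespace IsColoring

variable {C} {M N : V → Finset C.U} {d : V → ℕ} {I : Finset C.U}

lemma mono (h : C.IsColoring N d I) (hNM : ∀ v, N v ⊆ M v) : C.IsColoring M d I :=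
  ⟨h.indep, fun v => (h.inter_subset v).trans (hNM v), h.card_inter⟩

lemma insert (h : C.IsColoring (C.residual M x) d I) (hx : x ∈ M u) (hxL : x ∈ C.L u) :
    C.IsColoring M (d + Pi.single u 1) (insert x I) := by
  have hI : ∀ y ∈ I, y ≠ x ∧ ¬ C.H.Adj x y := by
    intro y hy
    obtain ⟨v, hyv, -⟩ := C.part y
    exact (Finset.mem_filter.mp (h.inter_subset v (Finset.mem_inter.mpr ⟨hy, hyv⟩))).2
  have hxI : x ∉ I := fun hmem => (hI x hmem).1 rfl
  have hxv : ∀ v, v ≠ u → x ∉ C.L v := fun v hvu hv => hvu (C.eq_of_mem_of_mem hv hxL)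
  have hIM : ∀ v, I ∩ C.L v ⊆ M v := fun v => (h.inter_subset v).trans (C.residual_subset M x v)
  refine ⟨?_, fun v => ?_, fun v => ?_⟩
  · simp only [Finset.forall_mem_insert]
    exact ⟨⟨C.H.irrefl, fun y hy => (hI y hy).2⟩,
      fun y hy => ⟨fun hyx => (hI y hy).2 hyx.symm, h.indep y hy⟩⟩
  · obtain rfl | hvu := eq_or_ne v u
    · rw [Finset.insert_inter_of_mem hxL]
      exact Finset.insert_subset hx (hIM v)
    · rw [Finset.insert_inter_of_notMem (hxv v hvu)]
      exact hIM v
  · obtain rfl | hvu := eq_or_ne v u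
    · rw [Finset.insert_inter_of_mem hxL,
        Finset.card_insert_of_notMem fun hmem => hxI (Finset.mem_inter.mp hmem).1, h.card_inter,
        Pi.add_apply, Pi.single_eq_same]
    · rw [Finset.insert_inter_of_notMem (hxv v hvu), h.card_inter, Pi.add_apply,
        Pi.single_eq_of_ne hvu, add_zero]

end IsColoring

/-- The invariant of the greedy colouring: the lists `M` of admissible colours are long enough for
the state `st`. Only active vertices need long lists, and a lower bound suffices because lists can
be trimmed. -/
structure HasLists (st : State V) (M : V → Finset C.U) : Prop where
  subset : ∀ v, M v ⊆ C.L v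
  le_card : ∀ v ∈ st.A, st.S v + st.T v ≤ (M v).card

variable {C} {st : State V} {M : V → Finset C.U} {W : Finset V}

lemma HasLists.exists_trim (hM : C.HasLists st M) :
    ∃ N : V → Finset C.U, (∀ v, N v ⊆ M v) ∧ ∀ v ∈ st.A, (N v).card = st.S v + st.T v := by
  have htrim : ∀ v, ∃ N ⊆ M v, v ∈ st.A → N.card = st.S v + st.T v := by
    intro v
    by_cases hv : v ∈ st.A
    · obtain ⟨N, hNM, hN⟩ := Finset.exists_subset_card_eq (hM.le_card v hv)
      exact ⟨N, hNM, fun _ => hN⟩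
    · exact ⟨M v, subset_rfl, fun h => absurd h hv⟩
  choose N hNM hN using htrim
  exact ⟨N, hNM, hN⟩

lemma exists_free_color (h : LegalStep G st u W) (hu : M u ⊆ C.L u)
    (hcard : ∀ v ∈ st.A, (M v).card = st.S v + st.T v) :
    ∃ x ∈ M u, ∀ w ∈ W, ∀ y ∈ M w, ¬ C.H.Adj x y := by
  obtain ⟨huA, hW, hlt, -⟩ := h
  have hcard_lt : (W.biUnion M).card < (M u).card :=
    calc (W.biUnion M).card
        ≤ ∑ w ∈ W, (M w).card := Finset.card_biUnion_le
      _ = ∑ w ∈ W, (st.S w + st.T w) := Finset.sum_congr rfl fun w hw => hcard w (hW w hw).1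
      _ < st.S u + st.T u := hlt
      _ = (M u).card := (hcard u huA).symm
  obtain ⟨x, hx, hfree⟩ := C.exists_mem_forall_not_adj hu hcard_lt
  exact ⟨x, hx, fun w hw y hy => hfree y (Finset.mem_biUnion.mpr ⟨w, hw, hy⟩)⟩

lemma HasLists.residual (hM : C.HasLists st M) (h : LegalStep G st u W) (hT : 1 ≤ st.T u)
    (hx : x ∈ C.L u) (hfree : ∀ w ∈ W, ∀ y ∈ M w, ¬ C.H.Adj x y) :
    C.HasLists (applyStep G st u W) (C.residual M x) := by
  refine ⟨fun v => (C.residual_subset M x v).trans (hM.subset v), fun v hv => ?_⟩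
  have hvA := mem_of_mem_applyStep hv
  have hle := hM.le_card v hvA
  have hres := C.card_le_card_residual_add_one (hM.subset v) x
  obtain rfl | hvu := eq_or_ne v u
  · have hweight := applyStep_S_add_T_self hT hv
    omega
  by_cases hunsaved : G.Adj u v ∧ v ∉ W
  · have hweight := h.applyStep_S_add_T_of_unsaved hvA hunsaved.1 hunsaved.2
    omega
  · have hsaved : G.Adj u v → v ∈ W := by simpa using hunsaved
    have hxv : x ∉ M v := fun hmem => hvu (C.eq_of_mem_of_mem (hM.subset v hmem) hx)
    have hadj : ∀ y ∈ M v, ¬ C.H.Adj x y := fun y hy hxy =>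
      hfree v (hsaved (C.cross u v x hx y (hM.subset v hy) hxy)) y hy hxy
    rwa [applyStep_S_add_T_of_ne hvu hsaved, C.residual_eq_self hxv hadj]

lemma HasLists.exists_isColoring {l : List (V × Finset V)} (hM : C.HasLists st M)
    (hT : ∀ v, 1 ≤ st.T v) (hl : LegalSeq G st l) (hfinal : (finalState G st l).A = ∅) :
    ∃ I, C.IsColoring M st.demand I := by
  induction l generalizing st M with
  | nil =>
    have hA : st.A = ∅ := hfinal
    exact ⟨∅, by simp, by simp, by simp [State.demand, hA]⟩
  | cons op l ih =>
    obtain ⟨u, W⟩ := op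
    obtain ⟨hstep, hl⟩ := hl
    obtain ⟨N, hNM, hcard⟩ := hM.exists_trim
    have hN : C.HasLists st N :=
      ⟨fun v => (hNM v).trans (hM.subset v), fun v hv => (hcard v hv).ge⟩
    obtain ⟨x, hx, hfree⟩ := exists_free_color hstep (hN.subset u) hcard
    have hxL : x ∈ C.L u := hN.subset u hx
    obtain ⟨I, hI⟩ :=
      ih (hN.residual hstep (hT u) hxL hfree) (fun v => one_le_applyStep_T (hT v)) hl hfinal
    refine ⟨insert x I, ?_⟩
    rw [← demand_applyStep_add_single hstep.1 (hT u)]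
    exact (hI.insert hx hxL).mono hNM

end Cover

lemma ST3Deg.dpColorableFn [Fintype V] {G : SimpleGraph V} {S T : V → ℕ} (h : ST3Deg G S T)
    (hT : ∀ v, 1 ≤ T v) : DPColorableFn G (fun v => S v + T v) T := by
  intro C hC
  obtain ⟨l, hl, hfinal⟩ := h
  have hlists : C.HasLists ⟨Finset.univ, S, T⟩ C.L := ⟨fun _ => subset_rfl, fun v _ => (hC v).ge⟩
  obtain ⟨I, hI⟩ := hlists.exists_isColoring hT hl hfinal
  exact ⟨I, hI.indep, fun v => by simpa [State.demand] using hI.card_inter v⟩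

lemma DPColorableFn.dpColorable {G : SimpleGraph V} {a b : ℕ}
    (h : DPColorableFn G (fun _ => a) fun _ => b) : DPColorable G a b := by
  intro C hC
  obtain ⟨I, hindep, hcard⟩ := h C hC
  exact ⟨I, hindep, fun v => (hcard v).ge⟩

lemma DPColorable.dpStar_le {G : SimpleGraph V} {a b : ℕ} (h : DPColorable G a b) (hb : 1 ≤ b)
    (hba : b ≤ a) : DPStar G ≤ (a : ℝ) / b := by
  refine csInf_le ⟨0, ?_⟩ ⟨a, b, hb, hba, h, rfl⟩
  rintro _ ⟨a, b, -, -, -, rfl⟩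
  positivity

/-- Suppose `S` and `T` are a shield and a target of a graph `G`.  If `G` is
`ST⁽³⁾`-`(S,T)`-degenerate, then `G` is `(S+T, T)`-DP-colorable.  Consequently, if `G` is
`ST⁽³⁾`-`(s,t)`-degenerate for integers `s ≥ 0` and `t ≥ 1`, then `χ*_DP(G) ≤ (s+t)/t`. -/
theorem st3Deg_implies_dp {V : Type} [Fintype V] (G : SimpleGraph V)
    (S T : V → ℕ) (hT : ∀ v, 1 ≤ T v) :
    (ST3Deg G S T → DPColorableFn G (fun v => S v + T v) T) ∧
    (∀ s t : ℕ, 1 ≤ t → ST3Deg G (fun _ => s) (fun _ => t) →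
      DPStar G ≤ ((s : ℝ) + t) / t) := by
  refine ⟨fun h => h.dpColorableFn hT, fun s t ht h => ?_⟩
  have hcol : DPColorable G (s + t) t := (h.dpColorableFn fun _ => ht).dpColorable
  exact_mod_cast hcol.dpStar_le ht (Nat.le_add_left t s)

end StrictDeg
end
end

section
/- For r ∈ ℕ and any integer k ≥ 2r−1, let G = P_k be the path whose vertices in order are v_1,…,v_k. Let S be the shield of G defined by S(v_1) = S(v_k) = 1 and S(v_i) = r+1 for all i with 2 ≤ i ≤ k−1, and let T be the target of G defined by T(v_i) = r for all i ∈ {1,…,k}. Then G is ST^(4)-(S,T)-degenerate. -/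
/-!
Number the positions on the path `0, …, k - 1`. First only the odd positions are operated on, each
exactly `r` times; they are pairwise nonadjacent, so their own shields never drop. Position `p`
uses its first `(p + 1) / 2` operations to shade `p - 1`, saving `p + 1`, and the remaining ones to
shade `p + 1`, saving `p - 1`.

The shields suffice: an inner even position `2j` is shaded at most `j + 1` times from the right and
`r - j` times from the left, `r + 1` in total; position `0` is shaded at most once, and position
`k - 1`, if even, at most `r - (k - 1) / 2 ≤ 1` times, which is where `k ≥ 2r - 1` enters.

The order is `r` sweeps over the odd positions, each from right to left. An operation at `p` that
follows `q` earlier ones there and saves a vertex starts from shield plus target `2r + 1 - q`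
(position `k - 1`, if odd, saves nothing, since `q < r ≤ k / 2`). The saved vertex has been shaded
at least `q + 1` times: if it is `p + 1`, then `p + 2` has shaded it in every sweep including the
present one; if it is `p - 1`, then `p` has shaded it `(p + 1) / 2` times and `p - 2` has shaded it
`q - (p - 1) / 2` times. If the saved vertex is an end of the path, its shield plus target is at
most `r + 1` anyway. So every operation is legal, and after the last sweep the surviving even
positions are pairwise nonadjacent and can be finished off freely.
-/

open scoped Classical

noncomputable section

namespace StrictDeg

variable {V : Type}

attribute [ext] State

/-- The state admits a complete restricted legal sequence: `ST4DegOn` for a bundled state. -/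
def State.IsST4Deg (st : State V) (G : SimpleGraph V) : Prop :=
  ST4DegOn G st.A st.S st.T

section LegalSequences

variable {G : SimpleGraph V} {st : State V} {u v : V} {W : Finset V}

lemma LegalStep.isST4Deg (hstep : LegalStep G st u W) (hW : W.card ≤ 1)
    (h : (applyStep G st u W).IsST4Deg G) : st.IsST4Deg G := by
  obtain ⟨l, hlegal, hcard, hfinal⟩ := h
  exact ⟨(u, W) :: l, ⟨hstep, hlegal⟩, List.forall_mem_cons.2 ⟨hW, hcard⟩, hfinal⟩

lemma mem_applyStep_A : v ∈ (applyStep G st u W).A ↔ v ∈ st.A ∧ (v = u → st.T u ≠ 1) := by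
  simp only [applyStep]
  split_ifs with h <;> simp [h, and_comm]

lemma applyStep_T_self (hT : 0 < st.T u) :
    (applyStep G st u W).T u = max 1 (st.T u - 1) := by
  simp only [applyStep, true_and]
  split_ifs <;> omega

lemma applyStep_T_of_ne (hv : v ≠ u) : (applyStep G st u W).T v = st.T v :=
  if_neg fun h => hv h.1

lemma applyStep_A_subset : (applyStep G st u W).A ⊆ st.A :=
  fun _ hv => (mem_applyStep_A.1 hv).1

lemma applyStep_T_le : (applyStep G st u W).T v ≤ st.T v := by
  simp only [applyStep]
  split_ifs with h
  · rw [h.1]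
    exact Nat.sub_le _ _
  · exact le_rfl

lemma applyStep_T_pos (hv : 0 < st.T v) : 0 < (applyStep G st u W).T v := by
  rcases eq_or_ne v u with rfl | hne
  · simp [applyStep_T_self hv]
  · rwa [applyStep_T_of_ne hne]

lemma sum_applyStep_T_lt (hu : u ∈ st.A) (hT : 0 < st.T u) :
    ∑ v ∈ (applyStep G st u W).A, (applyStep G st u W).T v < ∑ v ∈ st.A, st.T v := by
  by_cases huA : u ∈ (applyStep G st u W).A
  · have hTu : (applyStep G st u W).T u < st.T u := by
      have : st.T u ≠ 1 := (mem_applyStep_A.1 huA).2 rfl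
      rw [applyStep_T_self hT]
      omega
    calc ∑ v ∈ (applyStep G st u W).A, (applyStep G st u W).T v
        < ∑ v ∈ (applyStep G st u W).A, st.T v :=
          Finset.sum_lt_sum (fun _ _ => applyStep_T_le) ⟨u, huA, hTu⟩
      _ ≤ ∑ v ∈ st.A, st.T v := Finset.sum_le_sum_of_subset applyStep_A_subset
  · calc ∑ v ∈ (applyStep G st u W).A, (applyStep G st u W).T v
        ≤ ∑ v ∈ (applyStep G st u W).A, st.T v :=
          Finset.sum_le_sum fun _ _ => applyStep_T_le
      _ < ∑ v ∈ st.A, st.T v :=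
          Finset.sum_lt_sum_of_subset applyStep_A_subset hu huA hT fun _ _ _ => Nat.zero_le _

lemma isST4Deg_of_isIndepSet (st : State V) (hindep : G.IsIndepSet st.A)
    (hT : ∀ v ∈ st.A, 0 < st.T v) : st.IsST4Deg G := by
  induction hN : ∑ v ∈ st.A, st.T v using Nat.strong_induction_on generalizing st with
  | _ N ih =>
    subst hN
    rcases st.A.eq_empty_or_nonempty with hA | ⟨u, hu⟩
    · exact ⟨[], trivial, by simp, hA⟩
    have hlegal : LegalStep G st u ∅ :=
      ⟨hu, by simp, by simpa using Or.inr (hT u hu),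
        fun v hv huv => absurd huv (hindep hu hv huv.ne)⟩
    refine hlegal.isST4Deg (by simp) (ih _ (sum_applyStep_T_lt hu (hT u hu)) _ ?_ ?_ rfl)
    · exact hindep.mono (Finset.coe_subset.2 applyStep_A_subset)
    · exact fun v hv => applyStep_T_pos (hT v (applyStep_A_subset hv))

end LegalSequences

section Counts

variable [Fintype V] {G : SimpleGraph V} {S T n c n' c' : V → ℕ} {u : V} {W : Finset V}

/-- The state reached from shield `S` and target `T` once each vertex `v` has been operated on
`n v` times and shaded `c v` times. The target of a removed vertex is `1`, the value at which
`applyStep` leaves it. -/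
def State.ofCounts (S T n c : V → ℕ) : State V where
  A := {v | n v < T v}
  S v := S v - c v
  T v := max 1 (T v - n v)

lemma State.mem_ofCounts_A {v : V} : v ∈ (State.ofCounts S T n c).A ↔ n v < T v := by
  simp [State.ofCounts]

lemma applyStep_ofCounts [DecidableEq V] (hu : n u < T u) (hadj : ∀ v, G.Adj u v → n v < T v)
    (hnu : n' u = n u + 1) (hn : ∀ v, v ≠ u → n' v = n v)
    (hc : ∀ v, c' v = if G.Adj u v ∧ v ∉ W then c v + 1 else c v) :
    applyStep G (State.ofCounts S T n c) u W = State.ofCounts S T n' c' := by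
  have hTu : (State.ofCounts S T n c).T u = T u - n u := max_eq_right (by omega)
  refine State.ext (Finset.ext fun v => ?_) (funext fun v => ?_) (funext fun v => ?_)
  · rw [mem_applyStep_A, State.mem_ofCounts_A, State.mem_ofCounts_A, hTu]
    rcases eq_or_ne v u with rfl | hv
    · rw [hnu]
      grind
    · simp [hv, hn v hv]
  · have hshaded : G.Adj u v ∧ v ∈ (State.ofCounts S T n c).A ∧ v ∉ W ↔ G.Adj u v ∧ v ∉ W := by
      rw [State.mem_ofCounts_A]
      exact and_congr_right fun huv => and_iff_right (hadj v huv)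
    simp only [applyStep, hshaded]
    simp only [State.ofCounts, hc]
    split_ifs <;> omega
  · rcases eq_or_ne v u with rfl | hv
    · rw [applyStep_T_self (by omega), hTu]
      simp only [State.ofCounts, hnu, Nat.sub_sub]
    · rw [applyStep_T_of_ne hv]
      simp only [State.ofCounts, hn v hv]

lemma legalStep_ofCounts (hu : n u < T u) (hadj : ∀ v, G.Adj u v → n v < T v)
    (hc : ∀ v, G.Adj u v → v ∉ W → c v < S v) (hcard : W.card ≤ 1) (hW : ∀ w ∈ W, G.Adj u w)
    (hlt : ∀ w ∈ W, S w - c w + (T w - n w) < S u - c u + (T u - n u)) :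
    LegalStep G (State.ofCounts S T n c) u W := by
  refine ⟨State.mem_ofCounts_A.2 hu, fun w hw => ⟨State.mem_ofCounts_A.2 (hadj w (hW w hw)),
    hW w hw⟩, ?_, fun v _ huv hvW => Nat.sub_pos_of_lt (hc v huv hvW)⟩
  have hT : ∀ v, n v < T v → (State.ofCounts S T n c).T v = T v - n v :=
    fun v hv => max_eq_right (by omega)
  rw [hT u hu]
  rcases Nat.le_one_iff_eq_zero_or_eq_one.1 hcard with h0 | h1
  · rw [Finset.card_eq_zero.1 h0, Finset.sum_empty]
    omega
  · obtain ⟨w, rfl⟩ := Finset.card_eq_one.1 h1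
    have hw := Finset.mem_singleton_self w
    rw [Finset.sum_singleton, hT w (hadj w (hW w hw))]
    exact hlt w hw

end Counts

section PathShades

variable {r k p : ℕ} {n : ℕ → ℕ}

/-- The shield of the theorem as a function of the position on the path, counted from `0`. -/
def pathShield (r k i : ℕ) : ℕ := if i = 0 ∨ i = k - 1 then 1 else r + 1

/-- The position saved by the operation at `p` that follows `q` earlier ones there. It may be the
nonexistent position `k`, in which case nothing is saved. -/
def savedPos (p q : ℕ) : ℕ := if q < (p + 1) / 2 then p + 1 else p - 1

/-- The number of times position `i` has been shaded when each position `p` has been operated on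
`n p` times, saving `savedPos p q` for `q < n p`. At `i = 0` the truncated `i - 1` is harmless as
soon as `n 0 = 0`. -/
def shadeCount (n : ℕ → ℕ) (i : ℕ) : ℕ := (n (i - 1) - i / 2) + min (n (i + 1)) (i / 2 + 1)

/-- Operation counts arising when only odd positions on the path are operated on, each at most `r`
times. -/
structure IsOddCount (r k : ℕ) (n : ℕ → ℕ) : Prop where
  le : ∀ i, n i ≤ r
  eq_zero_of_even : ∀ i, Even i → n i = 0
  eq_zero_of_le : ∀ i, k ≤ i → n i = 0

lemma IsOddCount.update (hn : IsOddCount r k n) (hp : Odd p) (hpk : p < k) (hpr : n p < r) :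
    IsOddCount r k (Function.update n p (n p + 1)) where
  le i := by
    rcases eq_or_ne i p with rfl | hi
    · rwa [Function.update_self]
    · rw [Function.update_of_ne hi]
      exact hn.le i
  eq_zero_of_even i hi := by
    rw [Function.update_of_ne (by rintro rfl; exact Nat.not_even_iff_odd.2 hp hi)]
    exact hn.eq_zero_of_even i hi
  eq_zero_of_le i hi := by
    rw [Function.update_of_ne (hpk.trans_le hi).ne']
    exact hn.eq_zero_of_le i hi

lemma IsOddCount.shadeCount_eq_zero (hn : IsOddCount r k n) (hp : Odd p) :
    shadeCount n p = 0 := by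
  have hleft := hn.eq_zero_of_even (p - 1) (Nat.Odd.sub_odd hp odd_one)
  have hright := hn.eq_zero_of_even (p + 1) hp.add_one
  simp [shadeCount, hleft, hright]

lemma IsOddCount.shadeCount_le_pathShield (hn : IsOddCount r k n) (hk : 2 * r - 1 ≤ k) (i : ℕ) :
    shadeCount n i ≤ pathShield r k i := by
  have hleft := hn.le (i - 1)
  have hright := hn.le (i + 1)
  have h0 := hn.eq_zero_of_even 0 Even.zero
  have hend := hn.eq_zero_of_le (i + 1)
  unfold shadeCount pathShield
  split_ifs with hi
  · rcases eq_or_ne i 0 with rfl | hi0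
    · simp [h0]
    · omega
  · omega

lemma shadeCount_update (hp : 0 < p) (i : ℕ) :
    shadeCount (Function.update n p (n p + 1)) i =
      if (p + 1 = i ∨ i + 1 = p) ∧ i ≠ savedPos p (n p) then shadeCount n i + 1
      else shadeCount n i := by
  unfold shadeCount savedPos
  by_cases hleft : i - 1 = p
  · rw [hleft, Function.update_self, Function.update_of_ne (by omega)]
    split_ifs <;> omega
  · by_cases hright : i + 1 = p
    · rw [hright, Function.update_self, Function.update_of_ne hleft]
      split_ifs <;> omega
    · rw [Function.update_of_ne hleft, Function.update_of_ne hright, if_neg (by omega)]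

lemma lt_shadeCount_savedPos (hp : 0 < p) (hright : p + 2 < k → n p < n (p + 2))
    (hleft : 2 ≤ p → n p ≤ n (p - 2)) (hsaved : 0 < savedPos p (n p))
    (hsaved' : savedPos p (n p) + 1 < k) : n p < shadeCount n (savedPos p (n p)) := by
  unfold savedPos at *
  split_ifs at * with hq
  · have hright : n p < n (p + 1 + 1) := hright hsaved'
    unfold shadeCount
    omega
  · have hleft : n p ≤ n (p - 1 - 1) := hleft (by omega)
    rw [shadeCount, Nat.sub_add_cancel hp]
    omega

lemma pathShield_of_savedPos_lt (hk : 2 * r - 1 ≤ k) (hp : Odd p) {q : ℕ} (hq : q < r)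
    (hpk : p < k) (hsaved : savedPos p q < k) : pathShield r k p = r + 1 := by
  obtain ⟨j, rfl⟩ := hp
  refine if_neg ?_
  unfold savedPos at hsaved
  split_ifs at hsaved <;> omega

lemma savedPos_weight_lt (hk : 2 * r - 1 ≤ k) (hp : Odd p) (hpk : p < k) (hpr : n p < r)
    (hright : p + 2 < k → n p < n (p + 2)) (hleft : 2 ≤ p → n p ≤ n (p - 2))
    (hsaved : savedPos p (n p) < k) :
    pathShield r k (savedPos p (n p)) - shadeCount n (savedPos p (n p)) + r <
      pathShield r k p + (r - n p) := by
  have hshade := lt_shadeCount_savedPos hp.pos hright hleft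
  rw [pathShield_of_savedPos_lt hk hp hpr hpk hsaved]
  unfold pathShield
  split_ifs <;> omega

end PathShades

section Sweeps

variable {r k q m i : ℕ}

/-- The operation counts in the middle of a sweep from right to left: an odd position on the path
has been operated on `q + 1` times if it is at least `m`, and `q` times otherwise. -/
def sweepCount (k q m i : ℕ) : ℕ :=
  if Odd i ∧ i < k then if m ≤ i then q + 1 else q else 0

lemma sweepCount_of_odd_of_lt (hi : Odd i) (hik : i < k) (him : i < m) :
    sweepCount k q m i = q := by
  simp [sweepCount, hi, hik, him.not_ge]

lemma sweepCount_of_odd_of_ge (hi : Odd i) (hik : i < k) (hmi : m ≤ i) :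
    sweepCount k q m i = q + 1 := by
  simp [sweepCount, hi, hik, hmi]

lemma isOddCount_sweepCount (hq : q < r) : IsOddCount r k (sweepCount k q m) where
  le i := by
    unfold sweepCount
    split_ifs <;> omega
  eq_zero_of_even _ hi := if_neg fun h => Nat.not_even_iff_odd.2 h.1 hi
  eq_zero_of_le _ hi := if_neg fun h => hi.not_gt h.2

lemma sweepCount_zero_left : sweepCount k 0 k = 0 := by
  funext i
  simp only [sweepCount, Pi.zero_apply]
  split_ifs <;> omega

lemma sweepCount_zero_right : sweepCount k q 0 = sweepCount k (q + 1) k := by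
  funext i
  unfold sweepCount
  split_ifs <;> omega

lemma sweepCount_succ_of_not (hm : ¬ (Odd m ∧ m < k)) :
    sweepCount k q (m + 1) = sweepCount k q m := by
  funext i
  unfold sweepCount
  grind

lemma update_sweepCount (hm : Odd m) (hmk : m < k) :
    Function.update (sweepCount k q (m + 1)) m (sweepCount k q (m + 1) m + 1) =
      sweepCount k q m := by
  funext i
  unfold sweepCount
  grind

end Sweeps

section PathProcess

variable {r k q : ℕ} {n : ℕ → ℕ} {u v : Fin k}

/-- The state on the path when each position `i` has been operated on `n i` times, starting from
the shield and target of the theorem. -/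
def pathState (r k : ℕ) (n : ℕ → ℕ) : State (Fin k) :=
  State.ofCounts (fun v => pathShield r k v) (fun _ => r) (fun v => n v)
    (fun v => shadeCount n v)

/-- The set `W` of the operation at `u` that follows `q` earlier ones there. -/
def savedSet (u : Fin k) (q : ℕ) : Finset (Fin k) := {v | v.val = savedPos u q}

lemma mem_savedSet : v ∈ savedSet u q ↔ v.val = savedPos u q := by simp [savedSet]

lemma card_savedSet_le_one : (savedSet u q).card ≤ 1 :=
  Finset.card_le_one.2 fun _ ha _ hb =>
    Fin.ext ((mem_savedSet.1 ha).trans (mem_savedSet.1 hb).symm)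

lemma adj_of_mem_savedSet (hu : Odd u.val) (hv : v ∈ savedSet u q) :
    (SimpleGraph.pathGraph k).Adj u v := by
  rw [SimpleGraph.pathGraph_adj, mem_savedSet.1 hv]
  have := hu.pos
  unfold savedPos
  split_ifs <;> omega

lemma shadeCount_update_val (hu : Odd u.val) (v : Fin k) :
    shadeCount (Function.update n u (n u + 1)) v =
      if (SimpleGraph.pathGraph k).Adj u v ∧ v ∉ savedSet u (n u) then shadeCount n v + 1
      else shadeCount n v := by
  simp only [shadeCount_update hu.pos, SimpleGraph.pathGraph_adj, mem_savedSet, ne_eq]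

lemma even_iff_odd_of_pathGraph_adj (huv : (SimpleGraph.pathGraph k).Adj u v) :
    Even v.val ↔ Odd u.val := by
  rw [SimpleGraph.pathGraph_adj] at huv
  grind

lemma IsOddCount.lt_of_adj (hn : IsOddCount r k n) (hu : Odd u.val) (hur : n u < r) (v : Fin k)
    (huv : (SimpleGraph.pathGraph k).Adj u v) : n v < r := by
  rw [hn.eq_zero_of_even v ((even_iff_odd_of_pathGraph_adj huv).2 hu)]
  exact Nat.zero_lt_of_lt hur

lemma applyStep_pathState (hn : IsOddCount r k n) (hu : Odd u.val) (hur : n u < r) :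
    applyStep (SimpleGraph.pathGraph k) (pathState r k n) u (savedSet u (n u)) =
      pathState r k (Function.update n u (n u + 1)) :=
  applyStep_ofCounts hur (hn.lt_of_adj hu hur) (Function.update_self ..)
    (fun _ hv => Function.update_of_ne (Fin.val_ne_of_ne hv) ..) (shadeCount_update_val hu)

lemma legalStep_pathState (hk : 2 * r - 1 ≤ k) (hn : IsOddCount r k n) (hu : Odd u.val)
    (hur : n u < r) (hright : u.val + 2 < k → n u < n (u + 2))
    (hleft : 2 ≤ u.val → n u ≤ n (u - 2)) :
    LegalStep (SimpleGraph.pathGraph k) (pathState r k n) u (savedSet u (n u)) := by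
  refine legalStep_ofCounts hur (hn.lt_of_adj hu hur) (fun v huv hv => ?_) card_savedSet_le_one
    (fun w hw => adj_of_mem_savedSet hu hw) (fun w hw => ?_)
  · have hle := (hn.update hu u.isLt hur).shadeCount_le_pathShield hk v
    rwa [shadeCount_update_val hu, if_pos ⟨huv, hv⟩] at hle
  · have hweven : Even w.val := (even_iff_odd_of_pathGraph_adj (adj_of_mem_savedSet hu hw)).2 hu
    rw [hn.eq_zero_of_even w hweven, hn.shadeCount_eq_zero hu, mem_savedSet.1 hw]
    exact savedPos_weight_lt hk hu u.isLt hur hright hleft (mem_savedSet.1 hw ▸ w.isLt)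

lemma legalStep_sweepCount (hk : 2 * r - 1 ≤ k) (hq : q < r) (hu : Odd u.val) :
    LegalStep (SimpleGraph.pathGraph k) (pathState r k (sweepCount k q (u + 1))) u
      (savedSet u (sweepCount k q (u + 1) u)) := by
  have hself : sweepCount k q (u + 1) u = q :=
    sweepCount_of_odd_of_lt hu u.isLt (Nat.lt_succ_self _)
  refine legalStep_pathState hk (isOddCount_sweepCount hq) hu (hself.trans_lt hq)
    (fun hright => ?_) (fun hleft => ?_)
  · rw [hself, sweepCount_of_odd_of_ge (hu.add_even even_two) hright (Nat.le_succ _)]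
    exact Nat.lt_succ_self q
  · rw [hself,
      sweepCount_of_odd_of_lt (Nat.Odd.sub_even hleft hu even_two) (by omega) (by omega)]

lemma isST4Deg_pathState_sweepCount_succ (hk : 2 * r - 1 ≤ k) (hq : q < r) {m : ℕ}
    (h : (pathState r k (sweepCount k q m)).IsST4Deg (SimpleGraph.pathGraph k)) :
    (pathState r k (sweepCount k q (m + 1))).IsST4Deg (SimpleGraph.pathGraph k) := by
  by_cases hm : Odd m ∧ m < k
  · obtain ⟨hm, hmk⟩ := hm
    let u : Fin k := ⟨m, hmk⟩
    have hself : sweepCount k q (m + 1) m = q := sweepCount_of_odd_of_lt hm hmk m.lt_succ_self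
    refine (legalStep_sweepCount (u := u) hk hq hm).isST4Deg card_savedSet_le_one ?_
    rwa [applyStep_pathState (isOddCount_sweepCount hq) hm (hself.trans_lt hq),
      update_sweepCount hm hmk]
  · rwa [sweepCount_succ_of_not hm]

lemma isST4Deg_pathState_of_next_sweep (hk : 2 * r - 1 ≤ k) (hq : q < r)
    (h : (pathState r k (sweepCount k (q + 1) k)).IsST4Deg (SimpleGraph.pathGraph k)) :
    (pathState r k (sweepCount k q k)).IsST4Deg (SimpleGraph.pathGraph k) := by
  have hsweep : ∀ m, (pathState r k (sweepCount k q m)).IsST4Deg (SimpleGraph.pathGraph k) := by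
    intro m
    induction m with
    | zero => rwa [sweepCount_zero_right]
    | succ m ih => exact isST4Deg_pathState_sweepCount_succ hk hq ih
  exact hsweep k

lemma isST4Deg_pathState_of_sweeps_done :
    (pathState r k (sweepCount k r k)).IsST4Deg (SimpleGraph.pathGraph k) := by
  have heven : ∀ v ∈ (pathState r k (sweepCount k r k)).A, Even v.val := by
    intro v hv
    by_contra hodd
    rw [Nat.not_even_iff_odd] at hodd
    have hlt : sweepCount k r k v < r := State.mem_ofCounts_A.1 hv
    exact hlt.ne (sweepCount_of_odd_of_lt hodd v.isLt v.isLt)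
  refine isST4Deg_of_isIndepSet _ (fun u hu v hv _ huv => ?_) (fun v _ => ?_)
  · exact Nat.not_even_iff_odd.2 ((even_iff_odd_of_pathGraph_adj huv).1 (heven v hv)) (heven u hu)
  · exact Nat.lt_of_lt_of_le one_pos (le_max_left _ _)

lemma pathState_zero (hr : 0 < r) :
    pathState r k 0 = ⟨Finset.univ, fun v => pathShield r k v, fun _ => r⟩ := by
  simp [pathState, State.ofCounts, shadeCount, hr, Nat.max_eq_right (Nat.succ_le_of_lt hr)]

end PathProcess

/-- For `r ∈ ℕ` (so `r ≥ 1`) and any integer `k ≥ 2r−1`, let `G = P_k` be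
the path whose vertices in order are `v_1, …, v_k`.  Let `S` be the shield of `G` with
`S(v_1) = S(v_k) = 1` and `S(v_i) = r+1` for `2 ≤ i ≤ k−1`, and let `T` be the target that is
identically `r`.  Then `G` is `ST⁽⁴⁾`-`(S,T)`-degenerate. -/
theorem st4Deg_path (r k : ℕ) (hr : 1 ≤ r) (hk : 2 * r - 1 ≤ k) :
    ST4Deg (SimpleGraph.pathGraph k)
      (fun v => if v.val = 0 ∨ v.val = k - 1 then 1 else r + 1)
      (fun _ => r) := by
  have h : (pathState r k (sweepCount k 0 k)).IsST4Deg (SimpleGraph.pathGraph k) :=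
    Nat.decreasingInduction
      (motive := fun q _ => (pathState r k (sweepCount k q k)).IsST4Deg (SimpleGraph.pathGraph k))
      (fun _ hq => isST4Deg_pathState_of_next_sweep hk hq)
      isST4Deg_pathState_of_sweeps_done (Nat.zero_le r)
  rwa [sweepCount_zero_left, pathState_zero hr] at h

end StrictDeg
end
end
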